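/- For each n, let (N_1,…,N_n) ~ Mult(n, 1/n, …, 1/n) and define the random continuous function X_n ∈ C([0,1], ℝ) by X_n(k/n) = n^{−1/2} ∑_{j=1}^k (N_j − 1) for k = 0,…,n, with X_n affine on each interval [(k−1)/n, k/n]. Let B be a standard Brownian motion. Then the laws of X_n converge weakly, in the space C([0,1], ℝ) with the uniform topology, to the law of the Brownian bridge (B_t − t·B_1)_{t∈[0,1]}. -/

import Mathlib

open MeasureTheory ProbabilityTheory Filter Topology
open scoped ENNReal NNReal BoundedContinuousFunction unitInterval

/-- A random vector `X : Ω → Fin n → ℕ` has the multinomial distribution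
`Mult(k, 1/n, …, 1/n)` if `P(X = m) = k! / (∏ i, (m i)!) * n^{-k}` whenever
`∑ i, m i = k`, and `P(X = m) = 0` otherwise. -/
def IsMultinomialUnif {Ω : Type*} [MeasureSpace Ω] {n : ℕ}
    (X : Ω → Fin n → ℕ) (k : ℕ) : Prop :=
  ∀ m : Fin n → ℕ,
    ℙ {ω | X ω = m} =
      if ∑ i, m i = k then
        (k.factorial : ℝ≥0∞) / ((∏ i, ((m i).factorial : ℝ≥0∞)) * (n : ℝ≥0∞) ^ k)
      else 0

/-- `B : Ω → C([0,1], ℝ)` is a standard Brownian motion when it is a centered Gaussian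
process with covariance `min s t`, i.e. every linear combination `∑ i, c i * B (t i)` is a
centered Gaussian variable with variance `∑ i j, c i * c j * min (t i) (t j)`. -/
def IsStandardBM {Ω : Type*} [MeasureSpace Ω] (B : Ω → C(unitInterval, ℝ)) : Prop :=
  ∀ (k : ℕ) (ts : Fin k → unitInterval) (c : Fin k → ℝ),
    Measure.map (fun ω => ∑ i, c i * (B ω) (ts i)) ℙ
      = gaussianReal 0 (∑ i, ∑ j, c i * c j * min ((ts i : ℝ)) ((ts j : ℝ))).toNNReal

/-- The Brownian bridge associated with a path `g`: `t ↦ g t − t * g 1`. -/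
noncomputable def brBridge (g : C(unitInterval, ℝ)) : C(unitInterval, ℝ) :=
  ⟨fun u => g u - (u : ℝ) * g 1,
    (map_continuous g).sub (continuous_subtype_val.mul continuous_const)⟩

section Law

variable {Ω : Type*} [MeasureSpace Ω] [IsProbabilityMeasure (ℙ : Measure Ω)] {n : ℕ}
  {N : Ω → Fin n → ℕ}

lemma mult_ae_mem (hN : IsMultinomialUnif N n) :
    ∀ᵐ ω ∂(ℙ : Measure Ω), N ω ∈ Finset.piAntidiag Finset.univ n := by
  have h : ∀ m : Fin n → ℕ, ∀ᵐ ω ∂(ℙ : Measure Ω), ∑ i, m i ≠ n → N ω ≠ m := by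
    intro m
    by_cases hm : ∑ i, m i = n
    · simp [hm]
    · have := hN m
      rw [if_neg hm] at this
      have h2 : ∀ᵐ ω ∂(ℙ : Measure Ω), N ω ≠ m := by
        rw [ae_iff]; simpa using this
      filter_upwards [h2] with ω hω _ using hω
  rw [← ae_all_iff] at h
  filter_upwards [h] with ω hω
  simp only [Finset.mem_piAntidiag, Finset.mem_univ, implies_true, and_true]
  by_contra hc
  exact hω (N ω) hc rfl

lemma mult_integrable (hNm : Measurable N) (hN : IsMultinomialUnif N n)
    {E : Type*} [NormedAddCommGroup E] (G : (Fin n → ℕ) → E) :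
    Integrable (fun ω => G (N ω)) (ℙ : Measure Ω) := by
  have hG : StronglyMeasurable G := by
    exact StronglyMeasurable.of_discrete
  refine Integrable.of_bound (C := ∑ m ∈ Finset.piAntidiag Finset.univ n, ‖G m‖)
    (hG.comp_measurable hNm).aestronglyMeasurable ?_
  filter_upwards [mult_ae_mem hN] with ω hω
  exact Finset.single_le_sum (f := fun m => ‖G m‖) (fun _ _ => norm_nonneg _) hω

lemma mult_integral (hNm : Measurable N) (hN : IsMultinomialUnif N n)
    {E : Type*} [NormedAddCommGroup E] [NormedSpace ℝ E] [CompleteSpace E]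
    (G : (Fin n → ℕ) → E) :
    ∫ ω, G (N ω) ∂(ℙ : Measure Ω) = ∑ m ∈ Finset.piAntidiag Finset.univ n,
      ((Nat.multinomial Finset.univ m : ℝ) / (n : ℝ) ^ n) • G m := by
  have h1 : ∫ ω, G (N ω) ∂(ℙ : Measure Ω) = ∫ ω, ∑ m ∈ Finset.piAntidiag Finset.univ n,
      ({ω | N ω = m}.indicator (fun _ => G m) ω) ∂(ℙ : Measure Ω) := by
    apply integral_congr_ae
    filter_upwards [mult_ae_mem hN] with ω hω
    rw [Finset.sum_eq_single_of_mem (N ω) hω]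
    · simp
    · intro m _ hm
      simp [Ne.symm hm]
  have hms : ∀ m : Fin n → ℕ, MeasurableSet {ω | N ω = m} := fun m =>
    hNm (measurableSet_singleton m)
  rw [h1, integral_finsetSum]
  · apply Finset.sum_congr rfl
    intro m hm
    rw [integral_indicator (hms m)]
    rw [integral_const]
    congr 1
    simp only [Measure.real, Measure.restrict_apply_univ]
    rw [hN m]
    have hm' : ∑ i, m i = n := by simpa using hm
    rw [if_pos hm', Nat.multinomial, hm']
    rw [Nat.cast_div (Nat.prod_factorial_dvd_factorial_sum _ _ |>.trans (by rw [hm']))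
      (by exact_mod_cast (Finset.prod_ne_zero_iff.2 fun i _ => Nat.factorial_ne_zero _))]
    simp only [ENNReal.toReal_div, ENNReal.toReal_mul, ENNReal.toReal_pow, ENNReal.toReal_natCast,
      ENNReal.toReal_prod]
    push_cast
    rw [div_div]
  · intro m _
    exact (integrable_const (G m)).indicator (hms m)

lemma mult_gen {𝕜 : Type*} [RCLike 𝕜] (hNm : Measurable N) (hN : IsMultinomialUnif N n)
    (z : Fin n → 𝕜) :
    ∫ ω, ∏ j, z j ^ N ω j ∂(ℙ : Measure Ω) = ((∑ j, z j) / n) ^ n := by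
  rw [mult_integral hNm hN (fun m => ∏ j, z j ^ m j), div_pow,
    Finset.sum_pow_eq_sum_piAntidiag, Finset.sum_div]
  apply Finset.sum_congr rfl
  intro m _
  rw [RCLike.real_smul_eq_coe_mul]
  push_cast
  ring

end Law

section Moments

lemma four_pow_aux {a b : ℝ} (ha : 0 ≤ a) (hb : 0 ≤ b) :
    (a + b) ^ 4 ≤ 3 / 2 * a ^ 4 + 14641 * b ^ 4 := by
  rcases le_total (10 * b) a with h | h
  · have : (a + b) ^ 4 ≤ (11 / 10 * a) ^ 4 := by
      apply pow_le_pow_left₀ (by positivity); linarith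
    have h4 : 0 ≤ a ^ 4 := by positivity
    have h5 : 0 ≤ b ^ 4 := by positivity
    nlinarith
  · have : (a + b) ^ 4 ≤ (11 * b) ^ 4 := by
      apply pow_le_pow_left₀ (by positivity); linarith
    have h4 : 0 ≤ a ^ 4 := by positivity
    nlinarith

lemma bisect_max {α : Type*} [MeasurableSpace α] {μ : Measure α}
    {α' : Type*} (Y : α → α')
    (hintG : ∀ G : α' → ℝ, Integrable (fun ω => G (Y ω)) μ) (S : ℕ → α' → ℝ) (n : ℕ) (C : ℝ)
    (hC0 : 0 ≤ C)
    (hC : ∀ i k, i + k ≤ n → ∫ ω, (S (i + k) (Y ω) - S i (Y ω)) ^ 4 ∂μ ≤ C * (k : ℝ) ^ 2) :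
    ∀ K i, i + K ≤ n → ∃ M : α' → ℝ, (∀ y, 0 ≤ M y) ∧
      (∀ k ≤ K, ∀ y, |S (i + k) y - S i y| ≤ M y) ∧
      ∫ ω, M (Y ω) ^ 4 ∂μ ≤ 4 * 14641 * C * (K : ℝ) ^ 2 := by
  intro K
  induction K using Nat.strong_induction_on with
  | _ K ih =>
  intro i hi
  rcases Nat.eq_zero_or_pos K with rfl | hK
  · refine ⟨fun _ => 0, fun _ => le_rfl, ?_, by simp⟩
    intro k hk y
    obtain rfl : k = 0 := by omega
    simp
  obtain ⟨h, hh⟩ : ∃ h, h = (K - 1) / 2 := ⟨_, rfl⟩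
  obtain ⟨h', hh'⟩ : ∃ h', h' = K - h - 1 := ⟨_, rfl⟩
  obtain ⟨M1, h10, h1, h1i⟩ := ih h (by omega) i (by omega)
  obtain ⟨M2, h20, h2, h2i⟩ := ih h' (by omega) (i + (h + 1)) (by omega)
  have hmid := hC i (h + 1) (by omega)
  refine ⟨fun y => max (M1 y) (M2 y + |S (i + (h + 1)) y - S i y|), ?_, ?_, ?_⟩
  · intro y; exact le_max_of_le_left (h10 y)
  · intro k hk y
    rcases Nat.lt_or_ge k (h + 1) with hkh | hkh
    · exact le_max_of_le_left (h1 k (by omega) y)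
    · apply le_max_of_le_right
      have := h2 (k - (h + 1)) (by omega) y
      rw [show i + (h + 1) + (k - (h + 1)) = i + k by omega] at this
      calc |S (i + k) y - S i y| = |(S (i + k) y - S (i + (h + 1)) y)
            + (S (i + (h + 1)) y - S i y)| := by ring_nf
        _ ≤ _ := abs_add_le _ _
        _ ≤ _ := by linarith
  · have hle : ∀ y, (max (M1 y) (M2 y + |S (i + (h + 1)) y - S i y|)) ^ 4
        ≤ 3 / 2 * M1 y ^ 4 + (3 / 2 * M2 y ^ 4 + 14641 * (S (i + (h + 1)) y - S i y) ^ 4) := by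
      intro y
      have e1 := four_pow_aux (h20 y) (abs_nonneg (S (i + (h + 1)) y - S i y))
      rw [Even.pow_abs (by decide)] at e1
      have p1 : 0 ≤ M1 y ^ 4 := by positivity
      have p2 : 0 ≤ M2 y ^ 4 := by positivity
      have p3 : 0 ≤ (S (i + (h + 1)) y - S i y) ^ 4 := by positivity
      rcases max_choice (M1 y) (M2 y + |S (i + (h + 1)) y - S i y|) with e | e
      · rw [e]; linarith
      · rw [e]; linarith
    have hI : ∫ ω, (max (M1 (Y ω)) (M2 (Y ω) + |S (i + (h + 1)) (Y ω) - S i (Y ω)|)) ^ 4 ∂μ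
        ≤ 3 / 2 * ∫ ω, M1 (Y ω) ^ 4 ∂μ + (3 / 2 * ∫ ω, M2 (Y ω) ^ 4 ∂μ
          + 14641 * ∫ ω, (S (i + (h + 1)) (Y ω) - S i (Y ω)) ^ 4 ∂μ) := by
      rw [← integral_const_mul, ← integral_const_mul, ← integral_const_mul,
        ← integral_add (hintG fun y => 3 / 2 * M2 y ^ 4)
          (hintG fun y => 14641 * (S (i + (h + 1)) y - S i y) ^ 4),
        ← integral_add (hintG fun y => 3 / 2 * M1 y ^ 4)
          (hintG fun y => 3 / 2 * M2 y ^ 4 + 14641 * (S (i + (h + 1)) y - S i y) ^ 4)]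
      exact integral_mono
        (hintG fun y => (max (M1 y) (M2 y + |S (i + (h + 1)) y - S i y|)) ^ 4)
        (hintG fun y => 3 / 2 * M1 y ^ 4 + (3 / 2 * M2 y ^ 4
          + 14641 * (S (i + (h + 1)) y - S i y) ^ 4)) (fun ω => hle (Y ω))
    refine hI.trans ?_
    have k1 : (h : ℝ) ≤ K / 2 := by
      rw [le_div_iff₀ (by norm_num)]; norm_cast; omega
    have k2 : (h' : ℝ) ≤ K / 2 := by
      rw [le_div_iff₀ (by norm_num)]; norm_cast; omega
    have k3 : ((h + 1 : ℕ) : ℝ) ≤ K := by norm_cast; omega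
    have q1 : C * (h : ℝ) ^ 2 ≤ C * (K / 2) ^ 2 := by gcongr
    have q2 : C * (h' : ℝ) ^ 2 ≤ C * (K / 2) ^ 2 := by gcongr
    have q3 : C * ((h + 1 : ℕ) : ℝ) ^ 2 ≤ C * (K : ℝ) ^ 2 := by gcongr
    nlinarith

variable {Ω : Type*} [MeasureSpace Ω] [IsProbabilityMeasure (ℙ : Measure Ω)] {n : ℕ}
  {N : Ω → Fin n → ℕ}

lemma mult_mgf_block (hn : n ≠ 0) (hNm : Measurable N) (hN : IsMultinomialUnif N n)
    (T : Finset (Fin n)) (l : ℝ) (hl : |l| ≤ 1) :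
    ∫ ω, Real.exp (l * ∑ j ∈ T, ((N ω j : ℝ) - 1)) ∂(ℙ : Measure Ω)
      ≤ Real.exp (T.card * l ^ 2) := by
  have e1 : ∀ ω, Real.exp (l * ∑ j ∈ T, ((N ω j : ℝ) - 1))
      = (∏ j, (if j ∈ T then Real.exp l else 1) ^ N ω j) * Real.exp (-(T.card * l)) := by
    intro ω
    have : ∏ j, (if j ∈ T then Real.exp l else 1) ^ N ω j = Real.exp (∑ j ∈ T, l * N ω j) := by
      rw [Real.exp_sum]
      rw [← Finset.prod_subset (Finset.subset_univ T)]
      · apply Finset.prod_congr rfl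
        intro j hj
        rw [if_pos hj, ← Real.exp_nat_mul, mul_comm]
      · intro j _ hj
        simp [hj]
    rw [this, ← Real.exp_add]
    congr 1
    rw [Finset.sum_sub_distrib, ← Finset.mul_sum]
    simp; ring
  simp_rw [e1]
  rw [integral_mul_const, mult_gen hNm hN]
  have hsum : ∑ j : Fin n, (if j ∈ T then Real.exp l else 1) = n + T.card * (Real.exp l - 1) := by
    have : ∀ j : Fin n, (if j ∈ T then Real.exp l else 1)
        = 1 + (if j ∈ T then Real.exp l - 1 else 0) := by
      intro j; split_ifs <;> ring
    simp_rw [this]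
    rw [Finset.sum_add_distrib]
    simp
    ring
  have hn' : (0 : ℝ) < n := by positivity
  have hexp : Real.exp l - 1 - l ≤ l ^ 2 := by
    have := Real.abs_exp_sub_one_sub_id_le hl
    exact (le_abs_self _).trans this
  have hpos : 0 ≤ (∑ j : Fin n, (if j ∈ T then Real.exp l else 1)) / n := by
    apply div_nonneg _ hn'.le
    apply Finset.sum_nonneg; intro j _; split_ifs <;> positivity
  have hb : (∑ j : Fin n, (if j ∈ T then Real.exp l else 1)) / n
      ≤ Real.exp (T.card * (Real.exp l - 1) / n) := by
    rw [hsum, add_div, div_self hn'.ne', add_comm]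
    exact Real.add_one_le_exp _
  calc _ ≤ (Real.exp (T.card * (Real.exp l - 1) / n)) ^ n * Real.exp (-(T.card * l)) := by
        gcongr
    _ = Real.exp (T.card * (Real.exp l - 1 - l)) := by
        rw [← Real.exp_nat_mul, ← Real.exp_add]
        congr 1; field_simp; ring
    _ ≤ _ := by gcongr

lemma mult_fourth (hn : n ≠ 0) (hNm : Measurable N) (hN : IsMultinomialUnif N n)
    (T : Finset (Fin n)) :
    ∫ ω, (∑ j ∈ T, ((N ω j : ℝ) - 1)) ^ 4 ∂(ℙ : Measure Ω) ≤ 144 * (T.card : ℝ) ^ 2 := by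
  rcases Finset.eq_empty_or_nonempty T with rfl | hT
  · simp
  have hk : (1 : ℝ) ≤ T.card := by exact_mod_cast hT.card_pos
  set k : ℝ := (T.card : ℝ) with hkdef
  set l : ℝ := (Real.sqrt k)⁻¹ with hldef
  have hs : 1 ≤ Real.sqrt k := by rwa [Real.one_le_sqrt]
  have hl0 : 0 < l := by positivity
  have hl1 : l ≤ 1 := inv_le_one_of_one_le₀ hs
  have hl2 : k * l ^ 2 = 1 := by
    rw [hldef, inv_pow, Real.sq_sqrt (by linarith)]; field_simp
  have key : ∀ x : ℝ, x ^ 4 ≤ 24 * k ^ 2 * (Real.exp (l * x) + Real.exp (-l * x)) := by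
    intro x
    have h1 := Real.pow_div_factorial_le_exp |l * x| (abs_nonneg (l * x)) 4
    rw [Even.pow_abs (by decide)] at h1
    have h2 : Real.exp |l * x| ≤ Real.exp (l * x) + Real.exp (-l * x) := by
      rcases abs_choice (l * x) with e | e
      · rw [e]; linarith [Real.exp_pos (-l * x)]
      · rw [e, neg_mul]; linarith [Real.exp_pos (l * x)]
    have h3 : x ^ 4 = k ^ 2 * (l * x) ^ 4 := by
      have : k ^ 2 * (l * x) ^ 4 = (k * l ^ 2) ^ 2 * x ^ 4 := by ring
      rw [this, hl2]; ring
    have h4 : (l * x) ^ 4 ≤ 24 * (Real.exp (l * x) + Real.exp (-l * x)) := by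
      have : ((Nat.factorial 4 : ℕ) : ℝ) = 24 := by norm_num [Nat.factorial]
      rw [this] at h1
      linarith
    rw [h3]
    calc k ^ 2 * (l * x) ^ 4 ≤ k ^ 2 * (24 * (Real.exp (l * x) + Real.exp (-l * x))) := by gcongr
      _ = _ := by ring
  have i1 := mult_integrable hNm hN (fun m => (∑ j ∈ T, ((m j : ℝ) - 1)) ^ 4)
  have i2 := mult_integrable hNm hN (fun m => Real.exp (l * (∑ j ∈ T, ((m j : ℝ) - 1))))
  have i3 := mult_integrable hNm hN (fun m => Real.exp (-l * (∑ j ∈ T, ((m j : ℝ) - 1))))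
  have b1 := mult_mgf_block hn hNm hN T l (by rw [abs_of_pos hl0]; exact hl1)
  have b2 := mult_mgf_block hn hNm hN T (-l) (by rw [abs_neg, abs_of_pos hl0]; exact hl1)
  rw [← hkdef, neg_sq, hl2] at b2
  rw [← hkdef, hl2] at b1
  have he : Real.exp 1 ≤ 3 := by linarith [Real.exp_one_lt_d9]
  calc _ ≤ ∫ ω, 24 * k ^ 2 * (Real.exp (l * (∑ j ∈ T, ((N ω j : ℝ) - 1)))
          + Real.exp (-l * (∑ j ∈ T, ((N ω j : ℝ) - 1)))) ∂(ℙ : Measure Ω) :=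
        integral_mono i1 ((i2.add i3).const_mul _) (fun ω => key _)
    _ = 24 * k ^ 2 * (∫ ω, Real.exp (l * (∑ j ∈ T, ((N ω j : ℝ) - 1))) ∂(ℙ : Measure Ω)
          + ∫ ω, Real.exp (-l * (∑ j ∈ T, ((N ω j : ℝ) - 1))) ∂(ℙ : Measure Ω)) := by
        rw [integral_const_mul, integral_add i2 i3]
    _ ≤ 24 * k ^ 2 * (3 + 3) := by gcongr <;> linarith
    _ = _ := by ring

/-- centered partial sums -/
noncomputable def pSum {n : ℕ} (k : ℕ) (m : Fin n → ℕ) : ℝ :=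
  ∑ j ∈ Finset.univ.filter (fun j : Fin n => (j : ℕ) < k), ((m j : ℝ) - 1)

lemma pSum_sub {n : ℕ} (i k : ℕ) (m : Fin n → ℕ) :
    pSum (i + k) m - pSum i m
      = ∑ j ∈ Finset.univ.filter (fun j : Fin n => i ≤ (j : ℕ) ∧ (j : ℕ) < i + k),
          ((m j : ℝ) - 1) := by
  unfold pSum
  rw [sub_eq_iff_eq_add, ← Finset.sum_union]
  · congr 1
    ext j; simp; omega
  · rw [Finset.disjoint_left]; intro j; simp; omega

lemma card_window {n : ℕ} (i k : ℕ) :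
    (Finset.univ.filter (fun j : Fin n => i ≤ (j : ℕ) ∧ (j : ℕ) < i + k)).card ≤ k := by
  calc _ = ((Finset.univ.filter
        (fun j : Fin n => i ≤ (j : ℕ) ∧ (j : ℕ) < i + k)).map Fin.valEmbedding).card := by simp
    _ ≤ (Finset.Ico i (i + k)).card := by
        apply Finset.card_le_card
        intro x; simp only [Finset.mem_map, Finset.mem_filter, Finset.mem_Ico]
        rintro ⟨a, ha, rfl⟩; exact ha.2
    _ = k := by simp

lemma pSum_max (hn : n ≠ 0) (hNm : Measurable N) (hN : IsMultinomialUnif N n) (K i : ℕ) :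
    ∃ M : (Fin n → ℕ) → ℝ, (∀ y, 0 ≤ M y) ∧
      (∀ k ≤ K, ∀ y, |pSum (i + k) y - pSum i y| ≤ M y) ∧
      ∫ ω, M (N ω) ^ 4 ∂(ℙ : Measure Ω) ≤ 4 * 14641 * 144 * (K : ℝ) ^ 2 := by
  refine bisect_max N (fun G => mult_integrable hNm hN G) pSum (i + K) 144 (by norm_num) ?_ K i le_rfl
  intro i k _
  simp_rw [pSum_sub]
  refine (mult_fourth hn hNm hN _).trans ?_
  have := card_window (n := n) i k
  gcongr

end Moments

section CharFun

/-- the clamp function -/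
noncomputable def phi (j : ℕ) (x : ℝ) : ℝ := max 0 (min 1 (x - j))

lemma phi_nonneg (j : ℕ) (x : ℝ) : 0 ≤ phi j x := le_max_left _ _

lemma phi_le_one (j : ℕ) (x : ℝ) : phi j x ≤ 1 := max_le zero_le_one (min_le_left _ _)

lemma phi_mono (j : ℕ) {x y : ℝ} (h : x ≤ y) : phi j x ≤ phi j y := by
  unfold phi; gcongr

lemma sum_phi (n : ℕ) (x : ℝ) : ∑ j ∈ Finset.range n, phi j x = max 0 (min x n) := by
  induction n with
  | zero => simp
  | succ n ih =>
    rw [Finset.sum_range_succ, ih]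
    unfold phi
    have : (0 : ℝ) ≤ n := by positivity
    push_cast
    grind

lemma phi_pred_le (j : ℕ) {x y : ℝ} (h : x ≤ y) : phi j (x - 1) ≤ phi j x * phi j y := by
  unfold phi
  rcases le_total (x - 1 - j) 0 with h1 | h1
  · have : max 0 (min 1 (x - 1 - (j : ℝ))) = 0 := by grind
    rw [this]; positivity
  · have e1 : max 0 (min 1 (x - (j : ℝ))) = 1 := by grind
    have e2 : max 0 (min 1 (y - (j : ℝ))) = 1 := by grind
    rw [e1, e2]; grind

lemma sum_phi_mul_aux (n : ℕ) {x y : ℝ} (hx : 0 ≤ x) (hxy : x ≤ y) (hy : y ≤ n) :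
    |∑ j ∈ Finset.range n, phi j x * phi j y - min x y| ≤ 1 := by
  rw [min_eq_left hxy, abs_le]
  constructor
  · have h1 : ∑ j ∈ Finset.range n, phi j (x - 1) ≤ ∑ j ∈ Finset.range n, phi j x * phi j y :=
      Finset.sum_le_sum fun j _ => phi_pred_le j hxy
    rw [sum_phi] at h1
    grind
  · have h1 : ∑ j ∈ Finset.range n, phi j x * phi j y ≤ ∑ j ∈ Finset.range n, phi j x :=
      Finset.sum_le_sum fun j _ => mul_le_of_le_one_right (phi_nonneg _ _) (phi_le_one _ _)
    rw [sum_phi] at h1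
    grind

lemma sum_phi_mul (n : ℕ) {x y : ℝ} (hx : 0 ≤ x) (hx' : x ≤ n) (hy : 0 ≤ y) (hy' : y ≤ n) :
    |∑ j : Fin n, phi j x * phi j y - min x y| ≤ 1 := by
  rw [Fin.sum_univ_eq_sum_range (fun j => phi j x * phi j y)]
  rcases le_total x y with h | h
  · exact sum_phi_mul_aux n hx h hy'
  · rw [min_comm]
    simp_rw [mul_comm (phi _ x)]
    exact sum_phi_mul_aux n hy h hx'

lemma tendsto_phi_cov (s t : unitInterval) :
    Tendsto (fun n : ℕ => (n : ℝ)⁻¹ * ∑ j : Fin n, phi j (n * s) * phi j (n * t)) atTop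
      (𝓝 (min (s : ℝ) (t : ℝ))) := by
  rw [tendsto_iff_dist_tendsto_zero]
  refine squeeze_zero' (Eventually.of_forall fun _ => dist_nonneg) ?_
    tendsto_inv_atTop_nhds_zero_nat
  filter_upwards [eventually_gt_atTop 0] with n hn
  have hn' : (0 : ℝ) < n := by exact_mod_cast hn
  have h := sum_phi_mul n (x := n * s) (y := n * t) (mul_nonneg hn'.le s.2.1)
    (mul_le_of_le_one_right hn'.le s.2.2) (mul_nonneg hn'.le t.2.1)
    (mul_le_of_le_one_right hn'.le t.2.2)
  rw [← mul_min_of_nonneg _ _ hn'.le] at h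
  rw [Real.dist_eq]
  have e : (n : ℝ)⁻¹ * ∑ j : Fin n, phi j (n * s) * phi j (n * t) - min (s : ℝ) (t : ℝ)
      = (n : ℝ)⁻¹ * (∑ j : Fin n, phi j (n * s) * phi j (n * t) - n * min (s : ℝ) (t : ℝ)) := by
    field_simp
  rw [e, abs_mul, abs_of_pos (inv_pos.2 hn')]
  exact mul_le_of_le_one_right (inv_pos.2 hn').le h

lemma char_limit (b : ∀ n : ℕ, Fin n → ℝ) (C v : ℝ)
    (hb : ∀ n j, |b n j| ≤ C / Real.sqrt n) (h0 : ∀ n, ∑ j, b n j = 0)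
    (hv : Tendsto (fun n => ∑ j, (b n j) ^ 2) atTop (𝓝 v)) :
    Tendsto (fun n : ℕ => ((∑ j, Complex.exp (b n j * Complex.I)) / n) ^ n) atTop
      (𝓝 (Complex.exp (-(v : ℂ) / 2))) := by
  have hmain := Complex.tendsto_one_add_pow_exp_of_tendsto
    (g := fun n : ℕ => (∑ j, (Complex.exp (b n j * Complex.I) - 1)) / n) (t := -(v : ℂ) / 2) ?_
  · refine hmain.congr' ?_
    filter_upwards [eventually_gt_atTop 0] with n hn
    have hn' : (n : ℂ) ≠ 0 := by exact_mod_cast hn.ne'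
    congr 1
    rw [Finset.sum_sub_distrib]
    simp only [Finset.sum_const, Finset.card_univ, Fintype.card_fin, nsmul_eq_mul, mul_one]
    rw [sub_div, div_self hn']
    ring
  have hs : Tendsto (fun n : ℕ => C / Real.sqrt n) atTop (𝓝 0) :=
    tendsto_const_nhds.div_atTop (Real.tendsto_sqrt_atTop.comp tendsto_natCast_atTop_atTop)
  have hR : Tendsto (fun n : ℕ => ∑ j, (Complex.exp (b n j * Complex.I) - 1 - b n j * Complex.I
      + (b n j : ℂ) ^ 2 / 2)) atTop (𝓝 0) := by
    rw [tendsto_zero_iff_norm_tendsto_zero]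
    have hlim : Tendsto (fun n : ℕ => C ^ 2 * (C / Real.sqrt n)) atTop (𝓝 0) := by
      simpa using hs.const_mul (C ^ 2)
    refine squeeze_zero' (Eventually.of_forall fun _ => norm_nonneg _) ?_ hlim
    filter_upwards [eventually_gt_atTop 0, hs.eventually_le_const (zero_lt_one)] with n hn hC1
    have hn' : (0 : ℝ) < n := by exact_mod_cast hn
    have hterm : ∀ j, ‖Complex.exp (b n j * Complex.I) - 1 - b n j * Complex.I
      + (b n j : ℂ) ^ 2 / 2‖ ≤ (C / Real.sqrt n) ^ 3 := by
      intro j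
      have hx : ‖(b n j : ℂ) * Complex.I‖ = |b n j| := by simp
      have h1 := Complex.exp_bound (x := b n j * Complex.I) (n := 3)
        (by rw [hx]; exact (hb n j).trans hC1) (by norm_num)
      rw [hx] at h1
      simp [Finset.sum_range_succ, Nat.factorial, mul_pow] at h1
      have h2 : |b n j| ^ 3 ≤ (C / Real.sqrt n) ^ 3 := by
        gcongr; exact hb n j
      have h3 : 0 ≤ |b n j| ^ 3 := by positivity
      have h4 : Complex.exp (b n j * Complex.I) - 1 - b n j * Complex.I + (b n j : ℂ) ^ 2 / 2
        = Complex.exp (b n j * Complex.I) - (1 + b n j * Complex.I + -(b n j : ℂ) ^ 2 / 2) := by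
        ring
      rw [h4]
      refine h1.trans ?_
      nlinarith
    calc _ ≤ ∑ j : Fin n, (C / Real.sqrt n) ^ 3 := norm_sum_le_of_le _ fun j _ => hterm j
      _ = n * (C / Real.sqrt n) ^ 3 := by simp
      _ = C ^ 2 * (C / Real.sqrt n) := by
        have : Real.sqrt n ^ 2 = n := Real.sq_sqrt hn'.le
        have h0 : 0 < Real.sqrt n := Real.sqrt_pos.2 hn'
        field_simp
        rw [this]
        ring
  have hv' : Tendsto (fun n : ℕ => -(((∑ j, (b n j) ^ 2 : ℝ)) : ℂ) / 2) atTop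
      (𝓝 (-(v : ℂ) / 2)) := by
    exact ((Complex.continuous_ofReal.tendsto v).comp hv).neg.div_const 2
  have := hR.add hv'
  rw [zero_add] at this
  refine this.congr' ?_
  filter_upwards [eventually_gt_atTop 0] with n hn
  have hn' : (n : ℂ) ≠ 0 := by exact_mod_cast hn.ne'
  rw [mul_div_cancel₀ _ hn']
  have hz : ∑ j, (b n j : ℂ) * Complex.I = 0 := by
    rw [← Finset.sum_mul, ← Complex.ofReal_sum, h0]; simp
  simp only [Finset.sum_add_distrib, Finset.sum_sub_distrib, hz, ← Finset.sum_div]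
  push_cast
  ring

/-- the interpolated walk -/
noncomputable def walkL {n : ℕ} (m : Fin n → ℕ) (x : ℝ) : ℝ := ∑ j : Fin n, phi j x * ((m j : ℝ) - 1)

lemma walkL_eq {n : ℕ} (m : Fin n → ℕ) (k : ℕ) (x : ℝ) (h1 : (k : ℝ) ≤ x)
    (h2 : x ≤ k + 1) :
    walkL m x = pSum k m + (x - k) * (pSum (k + 1) m - pSum k m) := by
  have hphi : ∀ j : Fin n, phi j x = (if (j : ℕ) < k then 1 else 0)
      + (x - k) * (if k ≤ (j : ℕ) ∧ (j : ℕ) < k + 1 then 1 else 0) := by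
    intro j
    unfold phi
    rcases lt_trichotomy (j : ℕ) k with h | h | h
    · have h' : ((j : ℕ) : ℝ) + 1 ≤ k := by exact_mod_cast h
      rw [if_pos h, if_neg (by omega)]
      grind
    · rw [if_neg (by omega), if_pos (by omega), h]
      grind
    · have h' : (k : ℝ) + 1 ≤ ((j : ℕ) : ℝ) := by exact_mod_cast h
      rw [if_neg (by omega), if_neg (by omega)]
      grind
  rw [pSum_sub]
  unfold walkL pSum
  simp_rw [hphi, add_mul, Finset.sum_add_distrib, Finset.sum_filter, Finset.mul_sum]
  congr 1 <;> (apply Finset.sum_congr rfl; intro j _; split_ifs <;> simp)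

end CharFun

section Fdd

lemma mult_char {Ω : Type*} [MeasureSpace Ω] [IsProbabilityMeasure (ℙ : Measure Ω)] {n : ℕ}
    {N : Ω → Fin n → ℕ} (hn : n ≠ 0) (hNm : Measurable N) (hN : IsMultinomialUnif N n)
    (a : Fin n → ℝ) :
    ∫ ω, Complex.exp (((∑ j, a j * ((N ω j : ℝ) - 1) : ℝ) : ℂ) * Complex.I) ∂(ℙ : Measure Ω)
      = ((∑ j, Complex.exp (((a j - (∑ i, a i) / n : ℝ) : ℂ) * Complex.I)) / n) ^ n := by
  rw [← mult_gen hNm hN]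
  apply integral_congr_ae
  filter_upwards [mult_ae_mem hN] with ω hω
  have hs : ∑ i, N ω i = n := by simpa using hω
  have hs' : ∑ i, (N ω i : ℝ) = n := by exact_mod_cast hs
  have hn' : (n : ℝ) ≠ 0 := by exact_mod_cast hn
  have e : ∑ j, a j * ((N ω j : ℝ) - 1) = ∑ j, (a j - (∑ i, a i) / n) * N ω j := by
    simp_rw [sub_mul, mul_sub, Finset.sum_sub_distrib, ← Finset.mul_sum, hs']
    field_simp
  rw [e]
  simp_rw [← Complex.exp_nat_mul]
  rw [← Complex.exp_sum]
  congr 1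
  push_cast
  rw [Finset.sum_mul]
  apply Finset.sum_congr rfl
  intro j _
  ring

/-- coefficient of the linear functional -/
noncomputable def coefA {q : ℕ} (ts : Fin q → unitInterval) (c : Fin q → ℝ) (n : ℕ) (j : Fin n) : ℝ :=
  (Real.sqrt n)⁻¹ * ∑ i, c i * phi j (n * ts i)

lemma coefA_sum {q : ℕ} (ts : Fin q → unitInterval) (c : Fin q → ℝ) (n : ℕ) :
    ∑ j, coefA ts c n j = (Real.sqrt n)⁻¹ * (n * ∑ i, c i * ts i) := by
  unfold coefA
  rw [← Finset.mul_sum, Finset.sum_comm]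
  congr 1
  rw [Finset.mul_sum]
  apply Finset.sum_congr rfl
  intro i _
  rw [← Finset.mul_sum, Fin.sum_univ_eq_sum_range (fun j => phi j (n * ts i)), sum_phi]
  have h1 : (0 : ℝ) ≤ n * ts i := mul_nonneg (by positivity) (ts i).2.1
  have h2 : (n : ℝ) * ts i ≤ n := mul_le_of_le_one_right (by positivity) (ts i).2.2
  rw [min_eq_left h2, max_eq_right h1]
  ring

/-- the limiting variance -/
noncomputable def limVar {q : ℕ} (ts : Fin q → unitInterval) (c : Fin q → ℝ) : ℝ :=
  ∑ i, ∑ i', c i * c i' * min (ts i : ℝ) (ts i' : ℝ) - (∑ i, c i * ts i) ^ 2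

lemma coefA_var {q : ℕ} (ts : Fin q → unitInterval) (c : Fin q → ℝ) :
    Tendsto (fun n : ℕ => ∑ j, (coefA ts c n j - (∑ i, coefA ts c n i) / n) ^ 2) atTop
      (𝓝 (limVar ts c)) := by
  have h1 : Tendsto (fun n : ℕ => ∑ i, ∑ i', c i * c i' *
      ((n : ℝ)⁻¹ * ∑ j : Fin n, phi j (n * ts i) * phi j (n * ts i')) - (∑ i, c i * ts i) ^ 2)
      atTop (𝓝 (limVar ts c)) := by
    unfold limVar
    refine Tendsto.sub_const ?_ _
    refine tendsto_finsetSum _ fun i _ => tendsto_finsetSum _ fun i' _ => ?_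
    exact (tendsto_phi_cov _ _).const_mul _
  refine h1.congr' ?_
  filter_upwards [eventually_gt_atTop 0] with n hn
  have hn' : (0 : ℝ) < n := by exact_mod_cast hn
  have hr : (Real.sqrt n)⁻¹ ^ 2 = (n : ℝ)⁻¹ := by rw [inv_pow, Real.sq_sqrt hn'.le]
  have e0 : ∑ j, (coefA ts c n j - (∑ i, coefA ts c n i) / n) ^ 2
      = ∑ j, coefA ts c n j ^ 2 - (∑ i, coefA ts c n i) ^ 2 / n := by
    have : ∀ j, (coefA ts c n j - (∑ i, coefA ts c n i) / n) ^ 2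
        = coefA ts c n j ^ 2 - 2 * ((∑ i, coefA ts c n i) / n) * coefA ts c n j
          + ((∑ i, coefA ts c n i) / n) ^ 2 := fun j => by ring
    simp_rw [this]
    rw [Finset.sum_add_distrib, Finset.sum_sub_distrib, ← Finset.mul_sum]
    simp only [Finset.sum_const, Finset.card_univ, Fintype.card_fin, nsmul_eq_mul]
    field_simp
    ring
  rw [e0, coefA_sum, mul_pow, hr]
  congr 1
  · have : ∀ j : Fin n, coefA ts c n j ^ 2 = (n : ℝ)⁻¹ *
        ∑ i, ∑ i', (c i * phi j (n * ts i)) * (c i' * phi j (n * ts i')) := by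
      intro j
      unfold coefA
      rw [mul_pow, hr, sq, Finset.sum_mul_sum]
    simp_rw [this, Finset.mul_sum]
    symm
    rw [Finset.sum_comm]
    apply Finset.sum_congr rfl
    intro i _
    rw [Finset.sum_comm]
    apply Finset.sum_congr rfl
    intro i' _
    apply Finset.sum_congr rfl
    intro j _
    ring
  · field_simp

lemma limVar_nonneg {q : ℕ} (ts : Fin q → unitInterval) (c : Fin q → ℝ) : 0 ≤ limVar ts c :=
  ge_of_tendsto' (coefA_var ts c) fun _ => Finset.sum_nonneg fun _ _ => sq_nonneg _

lemma fdd_char (Ω : ℕ → Type*) [∀ n, MeasureSpace (Ω n)]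
    [∀ n, IsProbabilityMeasure (ℙ : Measure (Ω n))]
    (N : ∀ n, Ω n → Fin n → ℕ) (hNm : ∀ n, Measurable (N n)) (hN : ∀ n, IsMultinomialUnif (N n) n)
    {q : ℕ} (ts : Fin q → unitInterval) (c : Fin q → ℝ) :
    Tendsto (fun n : ℕ => ∫ ω, Complex.exp
      (((∑ i, c i * ((Real.sqrt n)⁻¹ * walkL (N n ω) (n * ts i)) : ℝ) : ℂ) * Complex.I)
        ∂(ℙ : Measure (Ω n))) atTop (𝓝 (Complex.exp (-(limVar ts c : ℂ) / 2))) := by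
  have hlim := char_limit (fun n j => coefA ts c n j - (∑ i, coefA ts c n i) / n)
    (2 * ∑ i, |c i|) (limVar ts c) ?_ ?_ (coefA_var ts c)
  · refine hlim.congr' ?_
    filter_upwards [eventually_gt_atTop 0] with n hn
    rw [← mult_char hn.ne' (hNm n) (hN n)]
    congr 1
    ext ω
    congr 3
    unfold coefA walkL
    simp_rw [Finset.mul_sum, Finset.sum_mul]
    rw [Finset.sum_comm]
    apply Finset.sum_congr rfl
    intro i _
    apply Finset.sum_congr rfl
    intro j _
    ring
  · intro n j
    have hn : n ≠ 0 := by rintro rfl; exact j.elim0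
    have hn' : (0 : ℝ) < n := by positivity
    have hs : 0 < Real.sqrt n := Real.sqrt_pos.2 hn'
    rw [coefA_sum]
    have e : (Real.sqrt n)⁻¹ * (n * ∑ i, c i * (ts i : ℝ)) / n
        = (Real.sqrt n)⁻¹ * ∑ i, c i * (ts i : ℝ) := by field_simp
    rw [e]
    unfold coefA
    rw [← mul_sub, abs_mul, abs_of_pos (inv_pos.2 hs), div_eq_inv_mul]
    gcongr
    have b1 : |∑ i, c i * phi j (n * ts i)| ≤ ∑ i, |c i| := by
      refine (Finset.abs_sum_le_sum_abs _ _).trans (Finset.sum_le_sum fun i _ => ?_)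
      rw [abs_mul, abs_of_nonneg (phi_nonneg _ _)]
      exact mul_le_of_le_one_right (abs_nonneg _) (phi_le_one _ _)
    have b2 : |∑ i, c i * (ts i : ℝ)| ≤ ∑ i, |c i| := by
      refine (Finset.abs_sum_le_sum_abs _ _).trans (Finset.sum_le_sum fun i _ => ?_)
      rw [abs_mul, abs_of_nonneg (ts i).2.1]
      exact mul_le_of_le_one_right (abs_nonneg _) (ts i).2.2
    refine (abs_sub _ _).trans ?_
    linarith
  · intro n
    rcases Nat.eq_zero_or_pos n with rfl | hn
    · simp
    · have hn' : (n : ℝ) ≠ 0 := by positivity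
      rw [Finset.sum_sub_distrib]
      simp
      field_simp
      ring

end Fdd

section Proj

/-- unnormalised hat function -/
noncomputable def hat (m : ℕ) (i : Fin (m + 2)) (t : unitInterval) : ℝ :=
  max 0 (1 - |((m : ℝ) + 1) * (t : ℝ) - ((i : ℕ) : ℝ)|)

lemma hat_nonneg (m : ℕ) (i : Fin (m + 2)) (t : unitInterval) : 0 ≤ hat m i t := le_max_left _ _

lemma hat_cont (m : ℕ) (i : Fin (m + 2)) : Continuous (hat m i) := by
  unfold hat; fun_prop

lemma hat_sum_pos (m : ℕ) (t : unitInterval) : 0 < ∑ i, hat m i t := by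
  have ht0 : 0 ≤ ((m : ℝ) + 1) * (t : ℝ) := mul_nonneg (by positivity) t.2.1
  have ht1 : ((m : ℝ) + 1) * (t : ℝ) ≤ m + 1 := mul_le_of_le_one_right (by positivity) t.2.2
  have hk : ⌊((m : ℝ) + 1) * (t : ℝ)⌋₊ < m + 2 := by
    rw [Nat.floor_lt ht0]; push_cast; linarith
  have h1 := Nat.floor_le ht0
  have h2 := Nat.lt_floor_add_one (((m : ℝ) + 1) * (t : ℝ))
  refine Finset.sum_pos' (fun i _ => hat_nonneg m i t) ⟨⟨_, hk⟩, Finset.mem_univ _, ?_⟩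
  unfold hat
  apply lt_max_of_lt_right
  simp only
  rw [abs_of_nonneg (by linarith)]
  linarith

/-- partition of unity -/
noncomputable def bas (m : ℕ) (i : Fin (m + 2)) : C(unitInterval, ℝ) :=
  ⟨fun t => hat m i t / ∑ i, hat m i t,
    (hat_cont m i).div (continuous_finsetSum _ fun i _ => hat_cont m i)
      fun t => (hat_sum_pos m t).ne'⟩

lemma bas_nonneg (m : ℕ) (i : Fin (m + 2)) (t : unitInterval) : 0 ≤ bas m i t :=
  div_nonneg (hat_nonneg m i t) (hat_sum_pos m t).le

lemma bas_sum (m : ℕ) (t : unitInterval) : ∑ i, bas m i t = 1 := by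
  simp only [bas, ContinuousMap.coe_mk]
  rw [← Finset.sum_div, div_self (hat_sum_pos m t).ne']

lemma bas_eq_zero (m : ℕ) (i : Fin (m + 2)) (t : unitInterval)
    (h : 1 < |((m : ℝ) + 1) * (t : ℝ) - ((i : ℕ) : ℝ)|) : bas m i t = 0 := by
  simp only [bas, ContinuousMap.coe_mk, hat]
  rw [max_eq_left (by linarith), zero_div]

/-- grid points -/
noncomputable def gpt (m : ℕ) (i : Fin (m + 2)) : unitInterval :=
  ⟨((i : ℕ) : ℝ) / ((m : ℝ) + 1), by positivity, by
    rw [div_le_one (by positivity)]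
    have := i.2
    exact_mod_cast (by omega : (i : ℕ) ≤ m + 1)⟩

lemma gpt_mul (m : ℕ) (i : Fin (m + 2)) : ((m : ℝ) + 1) * (gpt m i : ℝ) = ((i : ℕ) : ℝ) := by
  simp only [gpt]; field_simp

/-- evaluation at grid points -/
noncomputable def evalG (m : ℕ) (g : C(unitInterval, ℝ)) : EuclideanSpace ℝ (Fin (m + 2)) :=
  WithLp.toLp 2 fun i => g (gpt m i)

lemma evalG_cont (m : ℕ) : Continuous (evalG m) := by
  unfold evalG
  refine (PiLp.continuous_toLp 2 _).comp ?_
  refine continuous_pi fun i => ?_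
  exact ContinuousEvalConst.continuous_eval_const _

/-- reconstruction from grid values -/
noncomputable def recG (m : ℕ) (v : EuclideanSpace ℝ (Fin (m + 2))) : C(unitInterval, ℝ) :=
  ∑ i, v i • bas m i

lemma recG_cont (m : ℕ) : Continuous (recG m) := by
  unfold recG
  fun_prop

lemma rec_eval_dist (m : ℕ) (g : C(unitInterval, ℝ)) (W : ℝ) (hW0 : 0 ≤ W)
    (hW : ∀ (i : Fin (m + 2)) (t : unitInterval), |((m : ℝ) + 1) * (t : ℝ) - ((i : ℕ) : ℝ)| ≤ 1 → |g (gpt m i) - g t| ≤ W) :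
    dist (recG m (evalG m g)) g ≤ W := by
  rw [ContinuousMap.dist_le hW0]
  intro t
  have e1 : recG m (evalG m g) t = ∑ i, g (gpt m i) * bas m i t := by
    simp [recG, evalG, ContinuousMap.coe_sum]
  have e2 : g t = ∑ i, g t * bas m i t := by
    rw [← Finset.mul_sum, bas_sum, mul_one]
  rw [Real.dist_eq, e1]
  rw [e2]
  rw [← Finset.sum_sub_distrib]
  calc _ ≤ ∑ i, |g (gpt m i) * bas m i t - g t * bas m i t| := Finset.abs_sum_le_sum_abs _ _
    _ ≤ ∑ i, W * bas m i t := by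
      apply Finset.sum_le_sum
      intro i _
      rw [← sub_mul, abs_mul, abs_of_nonneg (bas_nonneg m i t)]
      rcases le_or_gt (|((m : ℝ) + 1) * (t : ℝ) - ((i : ℕ) : ℝ)|) 1 with h | h
      · exact mul_le_mul_of_nonneg_right (hW i t h) (bas_nonneg m i t)
      · rw [bas_eq_zero m i t h]; simp
    _ = W := by rw [← Finset.mul_sum, bas_sum, mul_one]

lemma rec_eval_tendsto (g : C(unitInterval, ℝ)) :
    Tendsto (fun m => recG m (evalG m g)) atTop (𝓝 g) := by
  rw [Metric.tendsto_atTop]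
  intro ε hε
  have huc := CompactSpace.uniformContinuous_of_continuous g.continuous
  rw [Metric.uniformContinuous_iff] at huc
  obtain ⟨δ, hδ, h⟩ := huc (ε / 2) (by positivity)
  obtain ⟨m0, hm0⟩ := exists_nat_gt (1 / δ)
  refine ⟨m0, fun m hm => ?_⟩
  refine lt_of_le_of_lt (rec_eval_dist m g (ε / 2) (by positivity) ?_) (by linarith)
  intro i t hit
  rw [← Real.dist_eq]
  refine (h ?_).le
  rw [Subtype.dist_eq, Real.dist_eq, abs_sub_comm]
  have hM : 1 / δ < (m : ℝ) + 1 := by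
    have : (m0 : ℝ) ≤ m := by exact_mod_cast hm
    linarith
  rw [← gpt_mul, ← mul_sub, abs_mul, abs_of_pos (by positivity)] at hit
  rw [div_lt_iff₀ hδ] at hM
  have hpos : (0 : ℝ) < m + 1 := by positivity
  by_contra hc
  push Not at hc
  nlinarith

lemma walk_window {n : ℕ} (y : Fin n → ℕ) (p K : ℕ) (W x : ℝ)
    (hW : ∀ k ≤ K, |pSum (p + k) y - pSum p y| ≤ W) (h1 : (p : ℝ) ≤ x) (h2 : x ≤ p + K) :
    |walkL y x - pSum p y| ≤ W := by
  have hx0 : 0 ≤ x := le_trans (by positivity) h1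
  have f1 := Nat.floor_le hx0
  have f2 := Nat.lt_floor_add_one x
  set k := ⌊x⌋₊ with hk
  have hpk : p ≤ k := Nat.le_floor h1
  rw [walkL_eq y k x f1 f2.le]
  have a1 : k ≤ p + K := by
    have : (k : ℝ) ≤ ((p + K : ℕ) : ℝ) := by push_cast; linarith
    exact_mod_cast this
  have w1 := hW (k - p) (by omega)
  rw [show p + (k - p) = k by omega] at w1
  rcases Nat.lt_or_ge k (p + K) with h | h
  · have w2 := hW (k + 1 - p) (by omega)
    rw [show p + (k + 1 - p) = k + 1 by omega] at w2
    rw [abs_le] at *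
    constructor <;> nlinarith
  · have : x = k := by
      apply le_antisymm _ f1
      have : ((p + K : ℕ) : ℝ) ≤ k := by exact_mod_cast h
      push_cast at this; linarith
    rw [← this]; simpa using w1

lemma tight_bound {Ω : Type*} [MeasureSpace Ω] [IsProbabilityMeasure (ℙ : Measure Ω)] {n : ℕ}
    {N : Ω → Fin n → ℕ} (hNm : Measurable N) (hN : IsMultinomialUnif N n)
    (m : ℕ) (hmn : m + 1 ≤ n) :
    ∃ V : (Fin n → ℕ) → ℝ, (∀ y (g : C(unitInterval, ℝ)),
      (∀ t : unitInterval, g t = (Real.sqrt n)⁻¹ * walkL y (n * t)) →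
        dist (recG m (evalG m g)) g ^ 4 ≤ V y) ∧
      ∫ ω, V (N ω) ∂(ℙ : Measure Ω) ≤ 512 * (4 * 14641 * 144) / ((m : ℝ) + 1) := by
  have hn : n ≠ 0 := by omega
  have hn' : (0 : ℝ) < n := by positivity
  have hM : (0 : ℝ) < (m : ℝ) + 1 := by positivity
  have hMn : (m : ℝ) + 1 ≤ n := by exact_mod_cast hmn
  set r := (Real.sqrt n)⁻¹ with hr
  have hr0 : 0 < r := inv_pos.2 (Real.sqrt_pos.2 hn')
  have hr4 : r ^ 4 = ((n : ℝ) ^ 2)⁻¹ := by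
    have : r ^ 2 = (n : ℝ)⁻¹ := by rw [hr, inv_pow, Real.sq_sqrt hn'.le]
    rw [show r ^ 4 = (r ^ 2) ^ 2 by ring, this, inv_pow]
  let p : Fin (m + 2) → ℕ := fun i => ⌊(n : ℝ) * ((((i : ℕ) : ℝ) - 1) / ((m : ℝ) + 1))⌋₊
  let K : ℕ := ⌈2 * (n : ℝ) / ((m : ℝ) + 1)⌉₊ + 1
  choose M hM0 hMle hMint using fun i => pSum_max hn hNm hN K (p i)
  have hK : (K : ℝ) ≤ 4 * n / ((m : ℝ) + 1) := by
    have h1 := (Nat.ceil_lt_add_one (show 0 ≤ 2 * (n : ℝ) / ((m : ℝ) + 1) by positivity)).le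
    have h2 : 1 ≤ (n : ℝ) / ((m : ℝ) + 1) := by rwa [one_le_div hM]
    have h3 : (K : ℝ) = (⌈2 * (n : ℝ) / ((m : ℝ) + 1)⌉₊ : ℝ) + 1 := by simp [K]
    rw [h3]
    have e1 : 2 * (n : ℝ) / ((m : ℝ) + 1) = 2 * (n / ((m : ℝ) + 1)) := by ring
    have e2 : 4 * (n : ℝ) / ((m : ℝ) + 1) = 4 * (n / ((m : ℝ) + 1)) := by ring
    rw [e2]
    nlinarith
  refine ⟨fun y => ∑ i, (2 * r * M i y) ^ 4, ?_, ?_⟩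
  · intro y g hg
    set V := ∑ i, (2 * r * M i y) ^ 4 with hV
    have hV0 : 0 ≤ V := Finset.sum_nonneg fun i _ => by positivity
    have hroot : Real.sqrt (Real.sqrt V) ^ 4 = V := by
      rw [show Real.sqrt (Real.sqrt V) ^ 4 = (Real.sqrt (Real.sqrt V) ^ 2) ^ 2 by ring,
        Real.sq_sqrt (Real.sqrt_nonneg _), Real.sq_sqrt hV0]
    change _ ≤ V
    rw [← hroot]
    refine pow_le_pow_left₀ dist_nonneg (rec_eval_dist m g _ (Real.sqrt_nonneg _) ?_) 4
    intro i t hit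
    have hone : 2 * r * M i y ≤ Real.sqrt (Real.sqrt V) := by
      apply Real.le_sqrt_of_sq_le
      apply Real.le_sqrt_of_sq_le
      rw [← pow_mul]
      exact Finset.single_le_sum (f := fun i => (2 * r * M i y) ^ (2 * 2))
        (fun i _ => pow_nonneg (mul_nonneg (by positivity) (hM0 i y)) _) (Finset.mem_univ i)
    refine le_trans ?_ hone
    have window : ∀ s : unitInterval, |((m : ℝ) + 1) * (s : ℝ) - ((i : ℕ) : ℝ)| ≤ 1 →
        |walkL y (n * s) - pSum (p i) y| ≤ M i y := by
      intro s hs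
      rw [abs_le] at hs
      have s1 : (((i : ℕ) : ℝ) - 1) / ((m : ℝ) + 1) ≤ s := by
        rw [div_le_iff₀ hM]; linarith
      have s2 : (s : ℝ) ≤ (((i : ℕ) : ℝ) - 1) / ((m : ℝ) + 1) + 2 / ((m : ℝ) + 1) := by
        rw [← add_div, le_div_iff₀ hM]; linarith
      refine walk_window y (p i) K (M i y) _ (fun k hk => hMle i k hk y) ?_ ?_
      · rcases le_total 0 ((n : ℝ) * ((((i : ℕ) : ℝ) - 1) / ((m : ℝ) + 1))) with h | h
        · refine (Nat.floor_le h).trans ?_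
          gcongr
        · have : p i = 0 := Nat.floor_of_nonpos h
          rw [this]
          simpa using mul_nonneg hn'.le s.2.1
      · have h1 : (n : ℝ) * ((((i : ℕ) : ℝ) - 1) / ((m : ℝ) + 1)) ≤ p i + 1 :=
          (Nat.lt_floor_add_one _).le
        have h2 : 2 * (n : ℝ) / ((m : ℝ) + 1) + 1 ≤ K := by
          simp only [K]; push_cast
          gcongr; exact Nat.le_ceil _
        have h3 : (n : ℝ) * s ≤ n * ((((i : ℕ) : ℝ) - 1) / ((m : ℝ) + 1) + 2 / ((m : ℝ) + 1)) := by
          gcongr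
        have h4 : (n : ℝ) * (2 / ((m : ℝ) + 1)) = 2 * (n : ℝ) / ((m : ℝ) + 1) := by ring
        rw [mul_add, h4] at h3
        linarith
    have w1 := window t hit
    have w2 := window (gpt m i) (by rw [gpt_mul]; simp)
    rw [hg, hg, ← mul_sub, abs_mul, abs_of_pos hr0]
    have : |walkL y (n * gpt m i) - walkL y (n * t)| ≤ 2 * M i y := by
      rw [abs_le] at *
      constructor <;> linarith
    nlinarith
  · rw [integral_finsetSum]
    · have hi : ∀ i, ∫ ω, (2 * r * M i (N ω)) ^ 4 ∂(ℙ : Measure Ω)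
          ≤ 256 * (4 * 14641 * 144) / ((m : ℝ) + 1) ^ 2 := by
        intro i
        have e : ∀ ω, (2 * r * M i (N ω)) ^ 4 = (16 * r ^ 4) * M i (N ω) ^ 4 := fun ω => by ring
        simp_rw [e]
        rw [integral_const_mul]
        calc _ ≤ (16 * r ^ 4) * (4 * 14641 * 144 * (4 * n / ((m : ℝ) + 1)) ^ 2) := by
              refine mul_le_mul_of_nonneg_left ((hMint i).trans ?_) (by positivity)
              gcongr
          _ = _ := by rw [hr4]; field_simp; norm_num
      refine (Finset.sum_le_sum fun i _ => hi i).trans ?_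
      simp only [Finset.sum_const, Finset.card_univ, Fintype.card_fin, nsmul_eq_mul]
      push_cast
      rw [mul_div_assoc', div_le_div_iff₀ (by positivity) hM]
      have : (0 : ℝ) ≤ m := by positivity
      nlinarith [mul_nonneg this this, mul_nonneg this hM.le]
    · intro i _
      exact mult_integrable hNm hN (fun y => (2 * r * M i y) ^ 4)

end Proj

section Final

lemma brBridge_cont : Continuous brBridge := by
  have h : brBridge = fun g : C(unitInterval, ℝ) =>
      g - (g 1) • (⟨fun u => (u : ℝ), continuous_subtype_val⟩ : C(unitInterval, ℝ)) := by
    funext g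
    ext u
    simp [brBridge, mul_comm]
  rw [h]
  have h1 : Continuous fun g : C(unitInterval, ℝ) => g 1 :=
    ContinuousEvalConst.continuous_eval_const _
  exact continuous_id.sub (h1.smul continuous_const)

lemma interp_formula {n : ℕ} (hn : n ≠ 0) (y : Fin n → ℕ) (g : C(unitInterval, ℝ))
    (hgrid : ∀ (k : ℕ), k ≤ n → ∀ (hk : (k : ℝ) / n ∈ unitInterval),
      g ⟨(k : ℝ) / n, hk⟩ = (Real.sqrt n)⁻¹ *
            ∑ j ∈ Finset.univ.filter (fun j : Fin n => (j : ℕ) < k), ((y j : ℝ) - 1))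
    (haffine : ∀ (k : ℕ), k < n → ∀ u : unitInterval,
      (k : ℝ) / n ≤ (u : ℝ) → (u : ℝ) ≤ ((k : ℝ) + 1) / n →
      ∀ (h1 : (k : ℝ) / n ∈ unitInterval) (h2 : ((k : ℝ) + 1) / n ∈ unitInterval),
      g u = g ⟨(k : ℝ) / n, h1⟩ + ((u : ℝ) - (k : ℝ) / n) * n *
            (g ⟨((k : ℝ) + 1) / n, h2⟩ - g ⟨(k : ℝ) / n, h1⟩)) (t : unitInterval) :
    g t = (Real.sqrt n)⁻¹ * walkL y (n * t) := by
  have hn' : (0 : ℝ) < n := by positivity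
  have hx0 : 0 ≤ (n : ℝ) * t := mul_nonneg hn'.le t.2.1
  have hx1 : (n : ℝ) * t ≤ n := mul_le_of_le_one_right hn'.le t.2.2
  obtain ⟨k, hkn, hk1, hk2⟩ : ∃ k : ℕ, k < n ∧ (k : ℝ) ≤ n * t ∧ (n : ℝ) * t ≤ k + 1 := by
    rcases Nat.lt_or_ge ⌊(n : ℝ) * t⌋₊ n with h | h
    · exact ⟨_, h, Nat.floor_le hx0, (Nat.lt_floor_add_one _).le⟩
    · have h3 : (n : ℝ) ≤ n * t := (Nat.le_floor_iff hx0).1 h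
      have h4 : ((n - 1 : ℕ) : ℝ) = n - 1 := by
        rw [Nat.cast_sub (by omega)]; simp
      exact ⟨n - 1, by omega, by rw [h4]; linarith, by rw [h4]; linarith⟩
  have hkn1 : (k : ℝ) + 1 ≤ n := by exact_mod_cast hkn
  have m1 : (k : ℝ) / n ∈ unitInterval := ⟨by positivity, by rw [div_le_one hn']; linarith⟩
  have m2 : ((k : ℝ) + 1) / n ∈ unitInterval := ⟨by positivity, by rw [div_le_one hn']; linarith⟩
  have m2' : ((k + 1 : ℕ) : ℝ) / n ∈ unitInterval := by push_cast; exact m2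
  have e := haffine k hkn t (by rw [div_le_iff₀ hn']; linarith) (by rw [le_div_iff₀ hn']; linarith)
    m1 m2
  have g1 : g ⟨(k : ℝ) / n, m1⟩ = (Real.sqrt n)⁻¹ * pSum k y := hgrid k hkn.le m1
  have g2 : g ⟨((k : ℝ) + 1) / n, m2⟩ = (Real.sqrt n)⁻¹ * pSum (k + 1) y := by
    have := hgrid (k + 1) hkn m2'
    rw [pSum, ← this]
    congr 1
    ext
    push_cast
    rfl
  rw [e, g1, g2, walkL_eq y k _ hk1 hk2]
  field_simp

variable [MeasurableSpace C(unitInterval, ℝ)] [BorelSpace C(unitInterval, ℝ)]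

lemma eval_meas {Ω : Type*} [MeasurableSpace Ω] {X : Ω → C(unitInterval, ℝ)} (hX : Measurable X)
    (t : unitInterval) : Measurable fun ω => X ω t :=
  (ContinuousEvalConst.continuous_eval_const (F := C(unitInterval, ℝ)) t).measurable.comp hX

lemma N_meas {Ω : Type*} [MeasurableSpace Ω] {X : Ω → C(unitInterval, ℝ)} (hX : Measurable X)
    {n : ℕ} {N : Ω → Fin n → ℕ}
    (hgrid : ∀ ω (k : ℕ), k ≤ n → ∀ (hk : (k : ℝ) / n ∈ unitInterval),
      X ω ⟨(k : ℝ) / n, hk⟩ = (Real.sqrt n)⁻¹ *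
            ∑ j ∈ Finset.univ.filter (fun j : Fin n => (j : ℕ) < k), ((N ω j : ℝ) - 1)) :
    Measurable N := by
  rw [measurable_pi_iff]
  intro j
  have hn : n ≠ 0 := by rintro rfl; exact j.elim0
  have hn' : (0 : ℝ) < n := by positivity
  have hs : 0 < Real.sqrt n := Real.sqrt_pos.2 hn'
  have hj : ((j : ℕ) : ℝ) + 1 ≤ n := by exact_mod_cast j.2
  have m1 : ((j : ℕ) : ℝ) / n ∈ unitInterval := ⟨by positivity, by rw [div_le_one hn']; linarith⟩
  have m2 : (((j : ℕ) + 1 : ℕ) : ℝ) / n ∈ unitInterval :=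
    ⟨by positivity, by rw [div_le_one hn']; push_cast; linarith⟩
  have e : (fun ω => N ω j) = fun ω => ⌊1 + Real.sqrt n *
      (X ω ⟨(((j : ℕ) + 1 : ℕ) : ℝ) / n, m2⟩ - X ω ⟨((j : ℕ) : ℝ) / n, m1⟩)⌋₊ := by
    funext ω
    have h1 := hgrid ω j j.2.le m1
    have h2 := hgrid ω (j + 1) j.2 m2
    change _ = _ * pSum _ _ at h1
    change _ = _ * pSum _ _ at h2
    have h3 : pSum ((j : ℕ) + 1) (N ω) - pSum j (N ω) = (N ω j : ℝ) - 1 := by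
      rw [pSum_sub]
      have : Finset.univ.filter (fun i : Fin n => (j : ℕ) ≤ i ∧ (i : ℕ) < j + 1) = {j} := by
        ext i; simp [Fin.ext_iff]; omega
      rw [this]; simp
    rw [h1, h2, ← mul_sub, h3, mul_inv_cancel_left₀ hs.ne']
    simp
  rw [e]
  exact Nat.measurable_floor.comp
    (((eval_meas hX _).sub (eval_meas hX _)).const_mul _ |>.const_add _)

lemma bridge_char {Ω' : Type*} [MeasureSpace Ω'] [IsProbabilityMeasure (ℙ : Measure Ω')]
    (B : Ω' → C(unitInterval, ℝ)) (hBmeas : Measurable B) (hB : IsStandardBM B)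
    {q : ℕ} (ts : Fin q → unitInterval) (c : Fin q → ℝ) :
    ∫ ω, Complex.exp (((∑ i, c i * brBridge (B ω) (ts i) : ℝ) : ℂ) * Complex.I)
      ∂(ℙ : Measure Ω') = Complex.exp (-(limVar ts c : ℂ) / 2) := by
  have h := hB (q + 1) (Fin.cons 1 ts) (Fin.cons (-∑ i, c i * (ts i : ℝ)) c)
  set Lf : Ω' → ℝ := fun ω => ∑ i : Fin (q + 1),
    (Fin.cons (-∑ i, c i * (ts i : ℝ)) c : Fin (q + 1) → ℝ) i *
      (B ω) ((Fin.cons 1 ts : Fin (q + 1) → unitInterval) i) with hLf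
  have hLm : Measurable Lf := Finset.measurable_sum _ fun i _ => (eval_meas hBmeas _).const_mul _
  have hLe : ∀ ω, ∑ i, c i * brBridge (B ω) (ts i) = Lf ω := by
    intro ω
    simp only [hLf, Fin.sum_univ_succ, Fin.cons_zero, Fin.cons_succ, brBridge,
      ContinuousMap.coe_mk, mul_sub, Finset.sum_sub_distrib]
    rw [neg_mul, Finset.sum_mul]
    simp_rw [mul_assoc]
    ring
  have hv : ∑ i : Fin (q + 1), ∑ j : Fin (q + 1),
      (Fin.cons (-∑ i, c i * (ts i : ℝ)) c : Fin (q + 1) → ℝ) i *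
      (Fin.cons (-∑ i, c i * (ts i : ℝ)) c : Fin (q + 1) → ℝ) j *
      min (((Fin.cons 1 ts : Fin (q + 1) → unitInterval) i : ℝ))
        (((Fin.cons 1 ts : Fin (q + 1) → unitInterval) j : ℝ)) = limVar ts c := by
    have hmin1 : ∀ i, min (1 : ℝ) (ts i : ℝ) = ts i := fun i => min_eq_right (ts i).2.2
    have hmin2 : ∀ i, min (ts i : ℝ) (1 : ℝ) = ts i := fun i => min_eq_left (ts i).2.2
    simp only [Fin.sum_univ_succ, Fin.cons_zero, Fin.cons_succ, Set.Icc.coe_one, min_self,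
      hmin1, hmin2, Finset.sum_add_distrib]
    set s := ∑ i, c i * (ts i : ℝ) with hs
    have a1 : ∑ i, -s * c i * (ts i : ℝ) = -s * s := by
      simp_rw [mul_assoc]; rw [← Finset.mul_sum]
    have a2 : ∑ i, c i * -s * (ts i : ℝ) = -s * s := by
      rw [← a1]; apply Finset.sum_congr rfl; intro i _; ring
    rw [a1, a2, limVar, ← hs]
    ring
  rw [hv] at h
  simp_rw [hLe]
  have h2 : ∫ ω, Complex.exp ((Lf ω : ℂ) * Complex.I) ∂(ℙ : Measure Ω')
      = charFun (Measure.map Lf ℙ) 1 := by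
    rw [charFun_apply_real, integral_map hLm.aemeasurable (by fun_prop)]
    simp
  rw [h2, h, charFun_gaussianReal]
  simp [limVar_nonneg, neg_div]

lemma inner_evalG (m : ℕ) (g : C(unitInterval, ℝ)) (c : EuclideanSpace ℝ (Fin (m + 2))) :
    inner ℝ (evalG m g) c = ∑ i, c i * g (gpt m i) := by
  simp [evalG, PiLp.inner_apply]

lemma charFun_evalG {Ω : Type*} [MeasureSpace Ω] (m : ℕ) {X : Ω → C(unitInterval, ℝ)}
    (hX : Measurable X) (c : EuclideanSpace ℝ (Fin (m + 2))) :
    charFun (Measure.map (fun ω => evalG m (X ω)) ℙ) c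
      = ∫ ω, Complex.exp (((∑ i, c i * X ω (gpt m i) : ℝ) : ℂ) * Complex.I)
        ∂(ℙ : Measure Ω) := by
  have hm : Measurable fun ω => evalG m (X ω) := (evalG_cont m).measurable.comp hX
  rw [charFun_apply, integral_map hm.aemeasurable (by fun_prop)]
  simp_rw [inner_evalG]

end Final

section Assemble

variable [MeasurableSpace C(unitInterval, ℝ)] [BorelSpace C(unitInterval, ℝ)]

lemma weak_of_char {Ω' : Type*} [MeasureSpace Ω'] [IsProbabilityMeasure (ℙ : Measure Ω')]
    {Y : Ω' → C(unitInterval, ℝ)} (hY : Measurable Y)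
    {Ω : ℕ → Type*} [∀ n, MeasureSpace (Ω n)] [∀ n, IsProbabilityMeasure (ℙ : Measure (Ω n))]
    {X : ∀ n, Ω n → C(unitInterval, ℝ)} (hX : ∀ n, Measurable (X n)) (m : ℕ)
    (h : ∀ c : Fin (m + 2) → ℝ, Tendsto (fun n => ∫ ω, Complex.exp
        (((∑ i, c i * X n ω (gpt m i) : ℝ) : ℂ) * Complex.I) ∂(ℙ : Measure (Ω n))) atTop
      (𝓝 (∫ ω, Complex.exp (((∑ i, c i * Y ω (gpt m i) : ℝ) : ℂ) * Complex.I)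
        ∂(ℙ : Measure Ω'))))
    (f : C(unitInterval, ℝ) →ᵇ ℝ) :
    Tendsto (fun n => ∫ ω, f (recG m (evalG m (X n ω))) ∂(ℙ : Measure (Ω n))) atTop
      (𝓝 (∫ ω, f (recG m (evalG m (Y ω))) ∂(ℙ : Measure Ω'))) := by
  have hm : ∀ n, Measurable fun ω => evalG m (X n ω) :=
    fun n => (evalG_cont m).measurable.comp (hX n)
  have hm0 : Measurable fun ω => evalG m (Y ω) := (evalG_cont m).measurable.comp hY
  let μ : ℕ → ProbabilityMeasure (EuclideanSpace ℝ (Fin (m + 2))) := fun n =>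
    ⟨Measure.map (fun ω => evalG m (X n ω)) ℙ,
      Measure.isProbabilityMeasure_map (hm n).aemeasurable⟩
  let μ₀ : ProbabilityMeasure (EuclideanSpace ℝ (Fin (m + 2))) :=
    ⟨Measure.map (fun ω => evalG m (Y ω)) ℙ, Measure.isProbabilityMeasure_map hm0.aemeasurable⟩
  have hμ : Tendsto μ atTop (𝓝 μ₀) := by
    apply ProbabilityMeasure.tendsto_of_tendsto_charFun
    intro c
    have h1 : ∀ n, charFun (μ n : Measure (EuclideanSpace ℝ (Fin (m + 2)))) c = _ :=
      fun n => charFun_evalG m (hX n) c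
    have h2 : charFun (μ₀ : Measure (EuclideanSpace ℝ (Fin (m + 2)))) c = _ :=
      charFun_evalG m hY c
    simp_rw [h1, h2]
    exact h c
  rw [ProbabilityMeasure.tendsto_iff_forall_integral_tendsto] at hμ
  have h3 := hμ (f.compContinuous ⟨recG m, recG_cont m⟩)
  have e1 : ∀ n, ∫ v, (f.compContinuous ⟨recG m, recG_cont m⟩) v ∂(μ n : Measure _)
      = ∫ ω, f (recG m (evalG m (X n ω))) ∂(ℙ : Measure (Ω n)) := fun n =>
    integral_map (hm n).aemeasurable
      (f.compContinuous ⟨recG m, recG_cont m⟩).continuous.aestronglyMeasurable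
  have e2 : ∫ v, (f.compContinuous ⟨recG m, recG_cont m⟩) v ∂(μ₀ : Measure _)
      = ∫ ω, f (recG m (evalG m (Y ω))) ∂(ℙ : Measure Ω') :=
    integral_map hm0.aemeasurable
      (f.compContinuous ⟨recG m, recG_cont m⟩).continuous.aestronglyMeasurable
  simp_rw [e1, e2] at h3
  exact h3

lemma bdd_integrable {Ω : Type*} [MeasureSpace Ω] [IsProbabilityMeasure (ℙ : Measure Ω)]
    {Z : Ω → C(unitInterval, ℝ)} (hZ : Measurable Z) (f : C(unitInterval, ℝ) →ᵇ ℝ) :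
    Integrable (fun ω => f (Z ω)) (ℙ : Measure Ω) :=
  Integrable.of_bound (f.continuous.measurable.comp hZ).aestronglyMeasurable ‖f‖
    (Eventually.of_forall fun _ => f.norm_coe_le_norm _)

lemma recev_meas {Ω : Type*} [MeasureSpace Ω]
    {Z : Ω → C(unitInterval, ℝ)} (hZ : Measurable Z) (m : ℕ) :
    Measurable fun ω => recG m (evalG m (Z ω)) :=
  ((recG_cont m).comp (evalG_cont m)).measurable.comp hZ

lemma approx_bound {Ω : Type*} [MeasureSpace Ω] [IsProbabilityMeasure (ℙ : Measure Ω)] {n : ℕ}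
    {N : Ω → Fin n → ℕ} (hNm : Measurable N) (hN : IsMultinomialUnif N n)
    {X : Ω → C(unitInterval, ℝ)} (hX : Measurable X)
    (hXN : ∀ ω (t : unitInterval), X ω t = (Real.sqrt n)⁻¹ * walkL (N ω) (n * t))
    (m : ℕ) (hmn : m + 1 ≤ n) (f : C(unitInterval, ℝ) →ᵇ ℝ) (L : ℝ≥0) (hf : LipschitzWith L f)
    (δ : ℝ) (hδ : 0 < δ) :
    |∫ ω, f (recG m (evalG m (X ω))) ∂(ℙ : Measure Ω) - ∫ ω, f (X ω) ∂(ℙ : Measure Ω)|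
      ≤ L * (δ + (512 * (4 * 14641 * 144) / ((m : ℝ) + 1)) / δ ^ 3) := by
  obtain ⟨V, hV, hVi⟩ := tight_bound hNm hN m hmn
  have hVint : Integrable (fun ω => V (N ω)) (ℙ : Measure Ω) := mult_integrable hNm hN V
  rw [← integral_sub (bdd_integrable (recev_meas hX m) f) (bdd_integrable hX f)]
  have hpt : ∀ ω, ‖f (recG m (evalG m (X ω))) - f (X ω)‖ ≤ L * (δ + V (N ω) / δ ^ 3) := by
    intro ω
    rw [← dist_eq_norm]
    refine (hf.dist_le_mul _ _).trans ?_
    refine mul_le_mul_of_nonneg_left ?_ L.2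
    have h1 := hV (N ω) (X ω) (hXN ω)
    have h0 : 0 ≤ dist (recG m (evalG m (X ω))) (X ω) := dist_nonneg
    set x := dist (recG m (evalG m (X ω))) (X ω)
    have h2 : x ≤ δ + x ^ 4 / δ ^ 3 := by
      rcases le_total x δ with h | h
      · have : 0 ≤ x ^ 4 / δ ^ 3 := by positivity
        linarith
      · have : x ≤ x ^ 4 / δ ^ 3 := by
          rw [le_div_iff₀ (by positivity)]
          have := pow_le_pow_left₀ hδ.le h 3
          nlinarith
        linarith
    have h3 : x ^ 4 / δ ^ 3 ≤ V (N ω) / δ ^ 3 := by gcongr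
    linarith
  have h4 := norm_integral_le_of_norm_le
    (((integrable_const δ).add (hVint.div_const (δ ^ 3))).const_mul (L : ℝ)) (Eventually.of_forall hpt)
  rw [Real.norm_eq_abs] at h4
  refine h4.trans ?_
  simp only [Pi.add_apply]
  rw [integral_const_mul, integral_add (integrable_const _) (hVint.div_const _), integral_div]
  simp only [integral_const, probReal_univ, smul_eq_mul, one_mul]
  gcongr

lemma lip_tendsto {Ω' : Type*} [MeasureSpace Ω'] [IsProbabilityMeasure (ℙ : Measure Ω')]
    {Y : Ω' → C(unitInterval, ℝ)} (hY : Measurable Y)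
    {Ω : ℕ → Type*} [∀ n, MeasureSpace (Ω n)] [∀ n, IsProbabilityMeasure (ℙ : Measure (Ω n))]
    {X : ∀ n, Ω n → C(unitInterval, ℝ)} (f : C(unitInterval, ℝ) →ᵇ ℝ) (L : ℝ≥0)
    (hA : ∀ m, Tendsto (fun n => ∫ ω, f (recG m (evalG m (X n ω))) ∂(ℙ : Measure (Ω n))) atTop
      (𝓝 (∫ ω, f (recG m (evalG m (Y ω))) ∂(ℙ : Measure Ω'))))
    (hB : ∀ n m, m + 1 ≤ n → ∀ δ : ℝ, 0 < δ →
      |∫ ω, f (recG m (evalG m (X n ω))) ∂(ℙ : Measure (Ω n))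
        - ∫ ω, f (X n ω) ∂(ℙ : Measure (Ω n))|
      ≤ L * (δ + (512 * (4 * 14641 * 144) / ((m : ℝ) + 1)) / δ ^ 3)) :
    Tendsto (fun n => ∫ ω, f (X n ω) ∂(ℙ : Measure (Ω n))) atTop
      (𝓝 (∫ ω, f (Y ω) ∂(ℙ : Measure Ω'))) := by
  rw [Metric.tendsto_atTop]
  intro ε hε
  have hC : Tendsto (fun m => ∫ ω, f (recG m (evalG m (Y ω))) ∂(ℙ : Measure Ω')) atTop
      (𝓝 (∫ ω, f (Y ω) ∂(ℙ : Measure Ω'))) := by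
    apply tendsto_integral_of_dominated_convergence (fun _ => ‖f‖)
    · exact fun m => (f.continuous.measurable.comp (recev_meas hY m)).aestronglyMeasurable
    · exact integrable_const _
    · exact fun m => Eventually.of_forall fun _ => f.norm_coe_le_norm _
    · exact Eventually.of_forall fun ω => (f.continuous.tendsto _).comp (rec_eval_tendsto (Y ω))
  have hL : (0 : ℝ) ≤ L := L.2
  set δ : ℝ := ε / (4 * (L + 1)) with hδd
  have hδ : 0 < δ := by positivity
  have hLδ : L * δ < ε / 4 := by
    rw [hδd, ← mul_div_assoc, div_lt_div_iff₀ (by positivity) (by positivity)]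
    nlinarith
  have hD : Tendsto (fun m : ℕ => (L : ℝ) * (δ + (512 * (4 * 14641 * 144) / ((m : ℝ) + 1)) / δ ^ 3))
      atTop (𝓝 (L * δ)) := by
    have h1 : Tendsto (fun m : ℕ => (512 * (4 * 14641 * 144) : ℝ) / ((m : ℝ) + 1)) atTop (𝓝 0) :=
      Tendsto.div_atTop tendsto_const_nhds
        (tendsto_atTop_add_const_right _ _ tendsto_natCast_atTop_atTop)
    have h2 := ((h1.div_const (δ ^ 3)).const_add δ).const_mul (L : ℝ)
    simpa using h2
  obtain ⟨m, hm1, hm2⟩ := ((hD.eventually (gt_mem_nhds hLδ)).and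
    (hC.eventually (Metric.ball_mem_nhds _ (show 0 < ε / 4 by positivity)))).exists
  obtain ⟨n0, hn0⟩ := (Metric.tendsto_atTop.1 (hA m)) (ε / 4) (by positivity)
  refine ⟨max n0 (m + 1), fun n hn => ?_⟩
  have h1 := hn0 n (le_of_max_le_left hn)
  have h2 := hB n m (le_of_max_le_right hn) δ hδ
  rw [Real.dist_eq, abs_lt] at hm2 h1 ⊢
  have h3 := abs_le.1 h2
  constructor <;> linarith [h1.1, h1.2, h3.1, h3.2, hm2.1, hm2.2]

lemma weak_of_lip {Ω' : Type*} [MeasureSpace Ω'] [IsProbabilityMeasure (ℙ : Measure Ω')]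
    {Y : Ω' → C(unitInterval, ℝ)} (hY : Measurable Y)
    {Ω : ℕ → Type*} [∀ n, MeasureSpace (Ω n)] [∀ n, IsProbabilityMeasure (ℙ : Measure (Ω n))]
    {X : ∀ n, Ω n → C(unitInterval, ℝ)} (hX : ∀ n, Measurable (X n))
    (h : ∀ (f : C(unitInterval, ℝ) →ᵇ ℝ) (L : ℝ≥0), LipschitzWith L f →
      Tendsto (fun n => ∫ ω, f (X n ω) ∂(ℙ : Measure (Ω n))) atTop
        (𝓝 (∫ ω, f (Y ω) ∂(ℙ : Measure Ω'))))
    (f : C(unitInterval, ℝ) →ᵇ ℝ) :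
    Tendsto (fun n => ∫ ω, f (X n ω) ∂(ℙ : Measure (Ω n))) atTop
        (𝓝 (∫ ω, f (Y ω) ∂(ℙ : Measure Ω'))) := by
  let μ : ℕ → ProbabilityMeasure C(unitInterval, ℝ) := fun n =>
    ⟨Measure.map (X n) ℙ, Measure.isProbabilityMeasure_map (hX n).aemeasurable⟩
  let μ₀ : ProbabilityMeasure C(unitInterval, ℝ) :=
    ⟨Measure.map Y ℙ, Measure.isProbabilityMeasure_map hY.aemeasurable⟩
  have e1 : ∀ (g : C(unitInterval, ℝ) →ᵇ ℝ) n, ∫ v, g v ∂(μ n : Measure C(unitInterval, ℝ))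
      = ∫ ω, g (X n ω) ∂(ℙ : Measure (Ω n)) := fun g n =>
    integral_map (hX n).aemeasurable g.continuous.measurable.aestronglyMeasurable
  have e2 : ∀ (g : C(unitInterval, ℝ) →ᵇ ℝ), ∫ v, g v ∂(μ₀ : Measure C(unitInterval, ℝ))
      = ∫ ω, g (Y ω) ∂(ℙ : Measure Ω') := fun g =>
    integral_map hY.aemeasurable g.continuous.measurable.aestronglyMeasurable
  have hμ : Tendsto μ atTop (𝓝 μ₀) := by
    rw [tendsto_iff_forall_lipschitz_integral_tendsto]
    rintro g ⟨C, hC⟩ ⟨L, hL⟩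
    have h1 := h (BoundedContinuousFunction.mkOfBound ⟨g, hL.continuous⟩ C hC) L hL
    simp_rw [← e1, ← e2] at h1
    exact h1
  have h2 := (ProbabilityMeasure.tendsto_iff_forall_integral_tendsto.1 hμ) f
  simp_rw [e1, e2] at h2
  exact h2

end Assemble

/-- **Proposition 2 of the paper.**  For each `n`, let `(N n j)_{j < n} ~ Mult(n, 1/n, …, 1/n)`
and let `X n : Ω n → C([0,1], ℝ)` be the random continuous function with
`X n (k/n) = n^{-1/2} ∑_{j < k} (N n j − 1)` for `k = 0, …, n`, interpolated affinely on each
interval `[k/n, (k+1)/n]`.  Then the laws of `X n` converge weakly, in `C([0,1], ℝ)` with the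
uniform topology, to the law of the Brownian bridge `(B t − t B 1)_{t ∈ [0,1]}` where `B` is
a standard Brownian motion; weak convergence is expressed by convergence of the integrals of
every bounded continuous function `f : C([0,1], ℝ) →ᵇ ℝ`. -/
theorem multinomial_walk_tendsto_brownian_bridge
    [MeasurableSpace C(unitInterval, ℝ)] [BorelSpace C(unitInterval, ℝ)]
    {Ω' : Type*} [MeasureSpace Ω'] [IsProbabilityMeasure (ℙ : Measure Ω')]
    (B : Ω' → C(unitInterval, ℝ)) (hBmeas : Measurable B) (hB : IsStandardBM B)
    (Ω : ℕ → Type*) [∀ n, MeasureSpace (Ω n)]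
    [∀ n, IsProbabilityMeasure (ℙ : Measure (Ω n))]
    (N : ∀ n, Ω n → Fin n → ℕ) (hN : ∀ n, IsMultinomialUnif (N n) n)
    (X : ∀ n, Ω n → C(unitInterval, ℝ)) (hXmeas : ∀ n, Measurable (X n))
    (hgrid : ∀ n (ω : Ω n) (k : ℕ), k ≤ n → ∀ (hk : (k : ℝ) / n ∈ unitInterval),
      X n ω ⟨(k : ℝ) / n, hk⟩
        = (Real.sqrt n)⁻¹ *
            ∑ j ∈ Finset.univ.filter (fun j : Fin n => (j : ℕ) < k), ((N n ω j : ℝ) - 1))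
    (haffine : ∀ n (ω : Ω n) (k : ℕ), k < n → ∀ u : unitInterval,
      (k : ℝ) / n ≤ (u : ℝ) → (u : ℝ) ≤ ((k : ℝ) + 1) / n →
      ∀ (h1 : (k : ℝ) / n ∈ unitInterval) (h2 : ((k : ℝ) + 1) / n ∈ unitInterval),
      X n ω u = X n ω ⟨(k : ℝ) / n, h1⟩
        + ((u : ℝ) - (k : ℝ) / n) * n *
            (X n ω ⟨((k : ℝ) + 1) / n, h2⟩ - X n ω ⟨(k : ℝ) / n, h1⟩)) :
    ∀ f : C(unitInterval, ℝ) →ᵇ ℝ,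
      Tendsto (fun n => ∫ ω, f (X n ω) ∂ℙ) atTop (𝓝 (∫ ω, f (brBridge (B ω)) ∂ℙ)) := by
  have hNm : ∀ n, Measurable (N n) := fun n => N_meas (hXmeas n) (hgrid n)
  have hY : Measurable fun ω => brBridge (B ω) := brBridge_cont.measurable.comp hBmeas
  have hform : ∀ n, n ≠ 0 → ∀ ω (t : unitInterval),
      X n ω t = (Real.sqrt n)⁻¹ * walkL (N n ω) (n * t) := fun n hn ω t =>
    interp_formula hn (N n ω) (X n ω) (hgrid n ω) (haffine n ω) t
  refine weak_of_lip hY hXmeas fun f L hf => ?_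
  refine lip_tendsto hY f L (fun m => weak_of_char hY hXmeas m (fun c => ?_) f) ?_
  · rw [bridge_char B hBmeas hB]
    refine (fdd_char Ω N hNm hN (gpt m) c).congr' ?_
    filter_upwards [eventually_ne_atTop 0] with n hn
    simp_rw [hform n hn]
  · intro n m hmn δ hδ
    exact approx_bound (hNm n) (hN n) (hXmeas n) (hform n (by omega)) m hmn f L hf δ hδ
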